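/- arXiv:math/9903016 — 4 statements merged into one kernel-verified Lean document; each statement's English description precedes it below -/
import Mathlib

section
/- The B₁-type R-matrix Ř of the three-dimensional orthogonal quantum plane satisfies the braid form of the Yang–Baxter equation: Ř₁₂ ∘ Ř₂₃ ∘ Ř₁₂ = Ř₂₃ ∘ Ř₁₂ ∘ Ř₂₃ as endomorphisms of ℂ³ ⊗ ℂ³ ⊗ ℂ³. -/
/-- The B₁-type R-matrix of the three-dimensional orthogonal quantum plane, with
`q = p²`, `d = q − q⁻¹`. The basis of `ℂ³` is indexed by `{+, 0, −}`, encoded as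
`0 ↦ +`, `1 ↦ 0`, `2 ↦ −`, and the basis of `ℂ³ ⊗ ℂ³` is ordered as
`(++, +0, +−, 0+, 00, 0−, −+, −0, −−)`. -/
noncomputable def RhatB (p : ℂ) : Matrix (Fin 3 × Fin 3) (Fin 3 × Fin 3) ℂ :=
  let q : ℂ := p ^ 2
  let d : ℂ := q - q⁻¹
  fun i j =>
    if i = (0, 0) ∧ j = (0, 0) then q
    else if i = (2, 2) ∧ j = (2, 2) then q
    else if i = (0, 1) ∧ j = (0, 1) then d
    else if i = (1, 2) ∧ j = (1, 2) then d
    else if i = (0, 1) ∧ j = (1, 0) then 1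
    else if i = (1, 0) ∧ j = (0, 1) then 1
    else if i = (1, 2) ∧ j = (2, 1) then 1
    else if i = (2, 1) ∧ j = (1, 2) then 1
    else if i = (0, 2) ∧ j = (0, 2) then d * (1 - q⁻¹)
    else if i = (0, 2) ∧ j = (1, 1) then -d * p⁻¹
    else if i = (1, 1) ∧ j = (0, 2) then -d * p⁻¹
    else if i = (0, 2) ∧ j = (2, 0) then q⁻¹
    else if i = (2, 0) ∧ j = (0, 2) then q⁻¹
    else if i = (1, 1) ∧ j = (1, 1) then 1
    else 0

/-- `T₁₂ = T ⊗ id` as a matrix on `ℂⁿ ⊗ ℂⁿ ⊗ ℂⁿ`. -/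
noncomputable def lift12 {n : ℕ} (T : Matrix (Fin n × Fin n) (Fin n × Fin n) ℂ) :
    Matrix (Fin n × Fin n × Fin n) (Fin n × Fin n × Fin n) ℂ :=
  fun i j => T (i.1, i.2.1) (j.1, j.2.1) * (if i.2.2 = j.2.2 then 1 else 0)

/-- `T₂₃ = id ⊗ T` as a matrix on `ℂⁿ ⊗ ℂⁿ ⊗ ℂⁿ`. -/
noncomputable def lift23 {n : ℕ} (T : Matrix (Fin n × Fin n) (Fin n × Fin n) ℂ) :
    Matrix (Fin n × Fin n × Fin n) (Fin n × Fin n × Fin n) ℂ :=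
  fun i j => (if i.1 = j.1 then 1 else 0) * T (i.2.1, i.2.2) (j.2.1, j.2.2)

/-!
Both sides are compared through their action on an arbitrary vector `v` of `ℂ³ ⊗ ℂ³ ⊗ ℂ³`. Each row
of `Ř` has at most three nonzero entries, so `Ř` acts by the short explicit formulas of
`RhatBAct` (`sum_RhatB_mul`), and `Ř₁₂`, `Ř₂₃` act by the same formulas with the third, respectively
the first, index held fixed (`lift12_mulVec`, `lift23_mulVec`). Applying them three times, each of the
27 coordinates of the braid relation becomes an identity, linear in the coordinates of `v`, whose
coefficients are Laurent polynomials in `p`; since `p ≠ 0`, clearing denominators reduces it to a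
polynomial identity.
-/

/-- The action of `Ř` on a vector of `ℂ³ ⊗ ℂ³`, written as a `3 × 3` array of coordinates `f a b`. -/
noncomputable def RhatBAct (p : ℂ) (f : Fin 3 → Fin 3 → ℂ) : Matrix (Fin 3) (Fin 3) ℂ :=
  let q : ℂ := p ^ 2
  let d : ℂ := q - q⁻¹
  !![q * f 0 0, d * f 0 1 + f 1 0, d * (1 - q⁻¹) * f 0 2 - d * p⁻¹ * f 1 1 + q⁻¹ * f 2 0;
     f 0 1, f 1 1 - d * p⁻¹ * f 0 2, d * f 1 2 + f 2 1;
     q⁻¹ * f 0 2, f 1 2, q * f 2 2]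

lemma sum_RhatB_mul (p : ℂ) (f : Fin 3 → Fin 3 → ℂ) (a b : Fin 3) :
    ∑ x, ∑ y, RhatB p (a, b) (x, y) * f x y = RhatBAct p f a b := by
  fin_cases a <;> fin_cases b <;> simp [Fin.sum_univ_three, RhatB, RhatBAct] <;> ring

lemma lift12_mulVec (p : ℂ) (v : Fin 3 × Fin 3 × Fin 3 → ℂ) (a b c : Fin 3) :
    (lift12 (RhatB p)).mulVec v (a, b, c) = RhatBAct p (fun x y => v (x, y, c)) a b := by
  rw [← sum_RhatB_mul]
  simp [Matrix.mulVec, dotProduct, Fintype.sum_prod_type, lift12]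

lemma lift23_mulVec (p : ℂ) (v : Fin 3 × Fin 3 × Fin 3 → ℂ) (a b c : Fin 3) :
    (lift23 (RhatB p)).mulVec v (a, b, c) = RhatBAct p (fun x y => v (a, x, y)) b c := by
  rw [← sum_RhatB_mul]
  simp only [Matrix.mulVec, dotProduct, Fintype.sum_prod_type, lift23]
  rw [Finset.sum_eq_single a (fun x _ hx => by simp [hx.symm]) (by simp)]
  simp

set_option maxHeartbeats 4000000 in
/-- The B₁-type R-matrix satisfies the braid form of the Yang–Baxter equation
`Ř₁₂ ∘ Ř₂₃ ∘ Ř₁₂ = Ř₂₃ ∘ Ř₁₂ ∘ Ř₂₃` on `ℂ³ ⊗ ℂ³ ⊗ ℂ³`. -/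
theorem RhatB_braid_yang_baxter (p : ℂ) (hp : p ≠ 0) :
    lift12 (RhatB p) * lift23 (RhatB p) * lift12 (RhatB p) =
      lift23 (RhatB p) * lift12 (RhatB p) * lift23 (RhatB p) := by
  apply Matrix.mulVec_injective
  funext v
  simp only [← Matrix.mulVec_mulVec]
  funext ⟨a, b, c⟩
  simp only [lift12_mulVec, lift23_mulVec]
  -- The cancellation lemmas are disabled: they would turn an equation into a disjunction with
  -- the possible vanishing of a common factor such as `p ^ 4 - 1`.
  fin_cases a <;> fin_cases b <;> fin_cases c <;>
    simp [RhatBAct, -mul_eq_mul_left_iff, -mul_eq_mul_right_iff] <;> field_simp <;> ring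
end

section
/- Let V be a finite-dimensional complex vector space, q ∈ ℂ, q ≠ 0, and let Ř be an invertible endomorphism of V ⊗ V satisfying the braid Yang–Baxter equation Ř₁₂Ř₂₃Ř₁₂ = Ř₂₃Ř₁₂Ř₂₃ and the cubic relation (Ř − λ₀)(Ř − λ₁)(Ř − λ₂) = 0 with λ₀, λ₁, λ₂ pairwise distinct. Set C := qŘ, D := C⁻¹, Q := (λ₁ − λ₀)⁻¹(λ₁ − λ₂)⁻¹(Ř − λ₀)(Ř − λ₂), and B = F := E − Q. Then the Bₙ-type consistency conditions hold: (E₁₂ − B₁₂) C₂₃ C₁₂ = C₂₃ C₁₂ (E₂₃ − B₂₃), D₂₃ C₁₂ C₂₃ = C₁₂ C₂₃ D₁₂, and (E₂₃ − F₂₃) C₁₂ C₂₃ = C₁₂ C₂₃ (E₁₂ − F₁₂), as identities of endomorphisms of V ⊗ V ⊗ V. -/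
/-! The maps `T ↦ T₁₂` and `T ↦ T₂₃` are unital algebra homomorphisms. The braid relation says
that `R₂₃ R₁₂` intertwines `R₂₃` with `R₁₂`, and that `R₁₂ R₂₃` intertwines `R₁₂` with `R₂₃`. An
intertwiner of two elements also intertwines every polynomial in them, and their inverses; since
`E - B = E - F = Q` is a polynomial in `R` and `D` is the inverse of `C = q R`, the three
conditions follow. -/

open TensorProduct

/-- `T₁₂ = T ⊗ id` as an endomorphism of `V ⊗ (V ⊗ V)`, via the associator. -/
noncomputable def end12 {V : Type*} [AddCommGroup V] [Module ℂ V]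
    (T : Module.End ℂ (V ⊗[ℂ] V)) : Module.End ℂ (V ⊗[ℂ] (V ⊗[ℂ] V)) :=
  (TensorProduct.assoc ℂ V V V).toLinearMap ∘ₗ
    TensorProduct.map T LinearMap.id ∘ₗ (TensorProduct.assoc ℂ V V V).symm.toLinearMap

/-- `T₂₃ = id ⊗ T` as an endomorphism of `V ⊗ (V ⊗ V)`. -/
noncomputable def end23 {V : Type*} [AddCommGroup V] [Module ℂ V]
    (T : Module.End ℂ (V ⊗[ℂ] V)) : Module.End ℂ (V ⊗[ℂ] (V ⊗[ℂ] V)) :=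
  TensorProduct.map LinearMap.id T

/-- `T ↦ T₁₂` as a homomorphism of algebras. -/
noncomputable def end12Hom (V : Type*) [AddCommGroup V] [Module ℂ V] :
    Module.End ℂ (V ⊗[ℂ] V) →ₐ[ℂ] Module.End ℂ (V ⊗[ℂ] (V ⊗[ℂ] V)) :=
  ((TensorProduct.assoc ℂ V V V).conjAlgEquiv ℂ).toAlgHom.comp
    (Module.End.rTensorAlgHom ℂ (V ⊗[ℂ] V) V)

/-- `T ↦ T₂₃` as a homomorphism of algebras. -/
noncomputable def end23Hom (V : Type*) [AddCommGroup V] [Module ℂ V] :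
    Module.End ℂ (V ⊗[ℂ] V) →ₐ[ℂ] Module.End ℂ (V ⊗[ℂ] (V ⊗[ℂ] V)) :=
  Module.End.lTensorAlgHom ℂ (V ⊗[ℂ] V) V

lemma end12_eq_hom {V : Type*} [AddCommGroup V] [Module ℂ V] (T : Module.End ℂ (V ⊗[ℂ] V)) :
    end12 T = end12Hom V T := rfl

lemma end23_eq_hom {V : Type*} [AddCommGroup V] [Module ℂ V] (T : Module.End ℂ (V ⊗[ℂ] V)) :
    end23 T = end23Hom V T := rfl

/-- If `u` intertwines the images of `x` under two algebra homomorphisms, it intertwines the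
images of every scalar multiple of `(x - a)(x - b)`. -/
lemma semiconjBy_quadratic {A M : Type*} [Ring A] [Algebra ℂ A] [Ring M] [Algebra ℂ M]
    (f g : A →ₐ[ℂ] M) {u : M} {x : A} (h : SemiconjBy u (f x) (g x)) (a b c : ℂ) :
    SemiconjBy u (f (c • ((x - a • (1 : A)) * (x - b • (1 : A)))))
      (g (c • ((x - a • (1 : A)) * (x - b • (1 : A))))) := by
  have hs : ∀ (k : ℂ) {y z : M}, SemiconjBy u y z → SemiconjBy u (k • y) (k • z) := by
    intro k y z hyz
    rw [SemiconjBy, mul_smul_comm, smul_mul_assoc, hyz.eq]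
  simp only [map_smul, map_mul, map_sub, map_one]
  exact hs c ((h.sub_right (hs a (SemiconjBy.one_right u))).mul_right
    (h.sub_right (hs b (SemiconjBy.one_right u))))

/-- An intertwiner of the images of a unit under two algebra homomorphisms intertwines the images of
its inverse. -/
lemma semiconjBy_inverse {A M : Type*} [Ring A] [Algebra ℂ A] [Ring M] [Algebra ℂ M]
    (f g : A →ₐ[ℂ] M) {u : M} {x : A} (hx : IsUnit x) (h : SemiconjBy u (f x) (g x)) :
    SemiconjBy u (f (Ring.inverse x)) (g (Ring.inverse x)) := by
  obtain ⟨v, rfl⟩ := hx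
  rw [Ring.inverse_unit]
  exact SemiconjBy.units_inv_right (x := Units.map (f : A →* M) v)
    (y := Units.map (g : A →* M) v) h

/-- Let `Ř` be an invertible endomorphism of `V ⊗ V` satisfying the braid Yang–Baxter
equation and the cubic relation `(Ř − λ₀)(Ř − λ₁)(Ř − λ₂) = 0` with pairwise distinct
eigenvalues. With `C := qŘ`, `D := C⁻¹`,
`Q := (λ₁ − λ₀)⁻¹(λ₁ − λ₂)⁻¹(Ř − λ₀)(Ř − λ₂)` and `B = F := E − Q`, the Bₙ-type
consistency conditions hold:
`(E₁₂ − B₁₂) C₂₃ C₁₂ = C₂₃ C₁₂ (E₂₃ − B₂₃)`, `D₂₃ C₁₂ C₂₃ = C₁₂ C₂₃ D₁₂`, and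
`(E₂₃ − F₂₃) C₁₂ C₂₃ = C₁₂ C₂₃ (E₁₂ − F₁₂)`. -/
theorem Bn_type_consistency
    {V : Type*} [AddCommGroup V] [Module ℂ V] [FiniteDimensional ℂ V]
    (q : ℂ) (hq : q ≠ 0) (R : Module.End ℂ (V ⊗[ℂ] V)) (hR : IsUnit R)
    (hYBE : end12 R * end23 R * end12 R = end23 R * end12 R * end23 R)
    (l0 l1 l2 : ℂ) (h01 : l0 ≠ l1) (h02 : l0 ≠ l2) (h12 : l1 ≠ l2)
    (hcubic : (R - l0 • (1 : Module.End ℂ (V ⊗[ℂ] V))) *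
        (R - l1 • (1 : Module.End ℂ (V ⊗[ℂ] V))) *
        (R - l2 • (1 : Module.End ℂ (V ⊗[ℂ] V))) = 0)
    (Q : Module.End ℂ (V ⊗[ℂ] V))
    (hQ : Q = ((l1 - l0)⁻¹ * (l1 - l2)⁻¹) •
        ((R - l0 • (1 : Module.End ℂ (V ⊗[ℂ] V))) *
          (R - l2 • (1 : Module.End ℂ (V ⊗[ℂ] V)))))
    (B C D : Module.End ℂ (V ⊗[ℂ] V))
    (hB : B = 1 - Q) (hC : C = q • R) (hD : D = Ring.inverse C) :
    (1 - end12 B) * end23 C * end12 C = end23 C * end12 C * (1 - end23 B) ∧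
      end23 D * end12 C * end23 C = end12 C * end23 C * end12 D ∧
      (1 - end23 B) * end12 C * end23 C = end12 C * end23 C * (1 - end12 B) := by
  have h1 : SemiconjBy (end23Hom V R * end12Hom V R) (end23Hom V R) (end12Hom V R) := by
    simpa only [SemiconjBy, mul_assoc, end12_eq_hom, end23_eq_hom] using hYBE.symm
  have h2 : SemiconjBy (end12Hom V R * end23Hom V R) (end12Hom V R) (end23Hom V R) := by
    simpa only [SemiconjBy, mul_assoc, end12_eq_hom, end23_eq_hom] using hYBE
  have k1 := semiconjBy_quadratic _ _ h1 l0 l2 ((l1 - l0)⁻¹ * (l1 - l2)⁻¹)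
  have k2 := semiconjBy_quadratic _ _ h2 l0 l2 ((l1 - l0)⁻¹ * (l1 - l2)⁻¹)
  rw [← hQ] at k1 k2
  have hCu : IsUnit C := by
    rw [hC]
    exact hR.smul (Units.mk0 q hq)
  have k3 : SemiconjBy (end12Hom V R * end23Hom V R) (end12Hom V D) (end23Hom V D) := by
    rw [hD]
    refine semiconjBy_inverse _ _ hCu ?_
    rw [hC, map_smul, map_smul, SemiconjBy, mul_smul_comm, smul_mul_assoc, h2.eq]
  simp only [end12_eq_hom, end23_eq_hom, hB, map_sub, map_one, sub_sub_cancel]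
  simp only [hC, map_smul, mul_smul_comm, smul_mul_assoc]
  refine ⟨?_, ?_, ?_⟩
  · rw [mul_assoc, k1.eq]
  · rw [mul_assoc, k3.eq]
  · rw [mul_assoc, k2.eq]
end

section
/- Let A be an associative unital ℂ-algebra, p ∈ ℂ, p ≠ 0, q = p², and let x⁺, x⁰, x⁻ ∈ A satisfy the relations of the three-dimensional orthogonal quantum plane: x⁺x⁰ = q x⁰x⁺, x⁰x⁻ = q x⁻x⁰, and x⁺x⁻ − x⁻x⁺ = (p⁻¹ − p) x⁰x⁰. Then the element r² := p⁻¹ x⁺x⁻ + x⁰x⁰ + p x⁻x⁺ commutes with each of x⁺, x⁰ and x⁻, i.e., r² is central in the subalgebra generated by x⁺, x⁰, x⁻. -/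
/-!
The third relation removes either `x⁺x⁻` or `x⁻x⁺` from `r²`, giving
`r² = (p + p⁻¹) x⁻x⁺ + p⁻² x⁰x⁰ = (p + p⁻¹) x⁺x⁻ + p² x⁰x⁰`.
The first form commutes with `x⁰` since `x⁻x⁺` does. For `x^±`, using one form on each
side makes the cubic words `x⁺x⁻x⁺` (resp. `x⁻x⁺x⁻`) agree, and the remaining terms
match because moving `x⁰x⁰` past `x^±` costs a factor `p^{±4}`.
-/

/-- Let `x⁺, x⁰, x⁻` satisfy the relations of the three-dimensional orthogonal
quantum plane (with `q = p²`, `q^{1/2} = p`): `x⁺x⁰ = q x⁰x⁺`, `x⁰x⁻ = q x⁻x⁰`,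
`x⁺x⁻ − x⁻x⁺ = (p⁻¹ − p) x⁰x⁰`. Then `r² := p⁻¹ x⁺x⁻ + x⁰x⁰ + p x⁻x⁺` commutes
with each of `x⁺`, `x⁰`, `x⁻`, i.e. the quantum sphere radius is central in the
subalgebra generated by the coordinates. -/
theorem quantum_sphere_radius_central
    {A : Type*} [Ring A] [Algebra ℂ A] (p : ℂ) (hp : p ≠ 0)
    (xp x0 xm : A)
    (h1 : xp * x0 = (p ^ 2) • (x0 * xp))
    (h2 : x0 * xm = (p ^ 2) • (xm * x0))
    (h3 : xp * xm - xm * xp = (p⁻¹ - p) • (x0 * x0)) :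
    (p⁻¹ • (xp * xm) + x0 * x0 + p • (xm * xp)) * xp =
        xp * (p⁻¹ • (xp * xm) + x0 * x0 + p • (xm * xp)) ∧
      (p⁻¹ • (xp * xm) + x0 * x0 + p • (xm * xp)) * x0 =
        x0 * (p⁻¹ • (xp * xm) + x0 * x0 + p • (xm * xp)) ∧
      (p⁻¹ • (xp * xm) + x0 * x0 + p • (xm * xp)) * xm =
        xm * (p⁻¹ • (xp * xm) + x0 * x0 + p • (xm * xp)) := by
  -- the two normal forms of `r²`
  have hr1 : p⁻¹ • (xp * xm) + x0 * x0 + p • (xm * xp) =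
      (p + p⁻¹) • (xm * xp) + (p⁻¹ ^ 2) • (x0 * x0) := by
    rw [sub_eq_iff_eq_add.mp h3]
    match_scalars <;> field_simp <;> ring
  have hr2 : p⁻¹ • (xp * xm) + x0 * x0 + p • (xm * xp) =
      (p + p⁻¹) • (xp * xm) + (p ^ 2) • (x0 * x0) := by
    have h : xm * xp = xp * xm - (p⁻¹ - p) • (x0 * x0) := by rw [← h3]; abel
    rw [h]
    match_scalars <;> field_simp <;> ring
  have h1' : xp * (x0 * x0) = (p ^ 4) • (x0 * x0 * xp) := by
    rw [← mul_assoc, h1, smul_mul_assoc, mul_assoc, h1, mul_smul_comm, smul_smul,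
      ← mul_assoc, ← pow_add]
  have h2' : x0 * x0 * xm = (p ^ 4) • (xm * (x0 * x0)) := by
    rw [mul_assoc, h2, mul_smul_comm, ← mul_assoc, h2, smul_mul_assoc, smul_smul,
      mul_assoc, ← pow_add]
  have hc : p⁻¹ ^ 2 * p ^ 4 = p ^ 2 := by field_simp
  refine ⟨?_, ?_, ?_⟩
  · -- `r²` is expanded by `hr2` on the left and by `hr1` on the right,
    -- so that both sides contain the same word `x⁺x⁻x⁺`
    conv_lhs => rw [hr2]
    rw [hr1, add_mul, mul_add, smul_mul_assoc, smul_mul_assoc, mul_smul_comm,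
      mul_smul_comm, h1', smul_smul, hc, mul_assoc xp xm xp]
  · have h : xm * xp * x0 = x0 * (xm * xp) := by
      rw [mul_assoc, h1, mul_smul_comm, ← mul_assoc, ← mul_assoc, h2, smul_mul_assoc]
    rw [hr1, add_mul, mul_add, smul_mul_assoc, smul_mul_assoc, mul_smul_comm,
      mul_smul_comm, h, mul_assoc x0 x0 x0]
  · conv_lhs => rw [hr1]
    rw [hr2, add_mul, mul_add, smul_mul_assoc, smul_mul_assoc, mul_smul_comm,
      mul_smul_comm, h2', smul_smul, hc, mul_assoc xm xp xm]
end

section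
/- Let A be an associative unital ℂ-algebra, p ∈ ℂ, p ≠ 0, q = p², and let x⁺, x⁰, x⁻, ξ⁺, ξ⁰, ξ⁻ ∈ A satisfy the coordinate–differential relations of the three-dimensional orthogonal quantum plane: x⁺ξ⁺ = q² ξ⁺x⁺; x⁺ξ⁰ = q ξ⁰x⁺ + (q² − 1) ξ⁺x⁰; x⁺ξ⁻ = ξ⁻x⁺ + (q⁻¹ − q) p ξ⁰x⁰ − (q⁻¹ − q)(q − 1) ξ⁺x⁻; x⁰ξ⁺ = q ξ⁺x⁰; x⁰ξ⁰ = q ξ⁰x⁰ + (q⁻¹ − q) p ξ⁺x⁻; x⁰ξ⁻ = q ξ⁻x⁰ + (q² − 1) ξ⁰x⁻; x⁻ξ⁺ = ξ⁺x⁻; x⁻ξ⁰ = q ξ⁰x⁻; x⁻ξ⁻ = q² ξ⁻x⁻. Then p⁻¹(ξ⁺x⁻ + x⁺ξ⁻) + ξ⁰x⁰ + x⁰ξ⁰ + p(ξ⁻x⁺ + x⁻ξ⁺) = (1 + q)(x⁰ξ⁰ + p x⁻ξ⁺ + p⁻¹ x⁺ξ⁻). In particular, if the left-hand side vanishes (as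 it does for the differential of the central element r² of the quantum sphere) and q ≠ −1, then x⁰ dx⁰ + √q x⁻ dx⁺ + (1/√q) x⁺ dx⁻ = 0 with ξ^i = dx^i. -/
/-- Let `x⁺, x⁰, x⁻, ξ⁺, ξ⁰, ξ⁻` satisfy the coordinate–differential relations of the
three-dimensional orthogonal quantum plane (with `q = p²`). Then
`p⁻¹(ξ⁺x⁻ + x⁺ξ⁻) + ξ⁰x⁰ + x⁰ξ⁰ + p(ξ⁻x⁺ + x⁻ξ⁺)
  = (1 + q)(x⁰ξ⁰ + p x⁻ξ⁺ + p⁻¹ x⁺ξ⁻)`.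
In particular, if the left-hand side vanishes (as for the differential of the central
element `r²` of the quantum sphere) and `q ≠ −1`, then
`x⁰ dx⁰ + √q x⁻ dx⁺ + (1/√q) x⁺ dx⁻ = 0` (with `ξⁱ = dxⁱ`). -/
theorem quantum_sphere_differential_relation
    {A : Type*} [Ring A] [Algebra ℂ A] (p : ℂ) (hp : p ≠ 0)
    (xp x0 xm ξp ξ0 ξm : A)
    (h1 : xp * ξp = (p ^ 2 * p ^ 2) • (ξp * xp))
    (h2 : xp * ξ0 = (p ^ 2) • (ξ0 * xp) + (p ^ 2 * p ^ 2 - 1) • (ξp * x0))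
    (h3 : xp * ξm = ξm * xp + (((p ^ 2)⁻¹ - p ^ 2) * p) • (ξ0 * x0)
        - (((p ^ 2)⁻¹ - p ^ 2) * (p ^ 2 - 1)) • (ξp * xm))
    (h4 : x0 * ξp = (p ^ 2) • (ξp * x0))
    (h5 : x0 * ξ0 = (p ^ 2) • (ξ0 * x0) + (((p ^ 2)⁻¹ - p ^ 2) * p) • (ξp * xm))
    (h6 : x0 * ξm = (p ^ 2) • (ξm * x0) + (p ^ 2 * p ^ 2 - 1) • (ξ0 * xm))
    (h7 : xm * ξp = ξp * xm)
    (h8 : xm * ξ0 = (p ^ 2) • (ξ0 * xm))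
    (h9 : xm * ξm = (p ^ 2 * p ^ 2) • (ξm * xm)) :
    (p⁻¹ • (ξp * xm + xp * ξm) + ξ0 * x0 + x0 * ξ0 + p • (ξm * xp + xm * ξp) =
        (1 + p ^ 2) • (x0 * ξ0 + p • (xm * ξp) + p⁻¹ • (xp * ξm))) ∧
      ((p : ℂ) ^ 2 ≠ -1 →
        p⁻¹ • (ξp * xm + xp * ξm) + ξ0 * x0 + x0 * ξ0 + p • (ξm * xp + xm * ξp) = 0 →
        x0 * ξ0 + p • (xm * ξp) + p⁻¹ • (xp * ξm) = 0) := by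
  have key : p⁻¹ • (ξp * xm + xp * ξm) + ξ0 * x0 + x0 * ξ0 + p • (ξm * xp + xm * ξp) =
      (1 + p ^ 2) • (x0 * ξ0 + p • (xm * ξp) + p⁻¹ • (xp * ξm)) := by
    -- After normal ordering, both sides are combinations of `ξm * xp`, `ξ0 * x0`, `ξp * xm`,
    -- with coefficients `(1 + q) p⁻¹`, `(1 + q) q⁻¹`, `(1 + q) p⁻¹ q⁻¹`.
    rw [h3, h5, h7]
    match_scalars <;> field_simp <;> ring
  refine ⟨key, fun hq h => ?_⟩
  have hne : (1 + p ^ 2 : ℂ) ≠ 0 := fun h' => hq (by linear_combination h')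
  rw [key] at h
  -- `1 + q` is invertible in `ℂ`, so it cancels in any `ℂ`-algebra.
  rw [← inv_smul_smul₀ hne (x0 * ξ0 + p • (xm * ξp) + p⁻¹ • (xp * ξm)), h, smul_zero]
end
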